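/- For any indices 0 ≤ i < j, and for any a, b in the support of the function f⁽ʲ⁾ − f⁽ⁱ⁾, we have |a − b| ≤ j − i. In particular, max supp(f⁽ʲ⁾ − f⁽ⁱ⁾) − min supp(f⁽ʲ⁾ − f⁽ⁱ⁾) ≤ j − i whenever the support is nonempty. -/

import Mathlib

/-!
A point of the support of `f⁽ʲ⁾ − f⁽ⁱ⁾` must be the position of the pointer at some time in
`[i, j)`, since an update changes `f` only at the pointer. The pointer moves by at most one per
operation, so its positions at two such times differ by at most the time between them.
-/

/-- An operation of the "dynamic convolution with local updates and queries"
data structure. -/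
inductive DCOp where
  | update (x : ℝ)
  | incP
  | decP
  | rotateLeft
  | rotateRight
  | query

/-- The state of the data structure: the function `f : ℤ → ℝ`, the update
pointer `p` and the rotation counter `c`. -/
structure DCState where
  f : ℤ → ℝ
  p : ℤ
  c : ℤ

/-- The effect of a single operation on the state. -/
def DCStep (s : DCState) : DCOp → DCState
  | .update x => { s with f := Function.update s.f s.p (s.f s.p + x) }
  | .incP => { s with p := s.p + 1 }
  | .decP => { s with p := s.p - 1 }
  | .rotateLeft => { s with c := s.c + 1 }
  | .rotateRight => { s with c := s.c - 1 }
  | .query => s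

/-- `DCRun ops k` is the state after performing the first `k` operations
`ops 1, ops 2, …, ops k`, starting from `f ≡ 0`, `p = 0`, `c = 0`. -/
def DCRun (ops : ℕ → DCOp) : ℕ → DCState
  | 0 => ⟨0, 0, 0⟩
  | k + 1 => DCStep (DCRun ops k) (ops (k + 1))

open scoped NNReal in
lemma lipschitzWith_of_dist_succ_le {α : Type*} [PseudoMetricSpace α] {u : ℕ → α} {K : ℝ≥0}
    (hu : ∀ n, dist (u n) (u (n + 1)) ≤ K) : LipschitzWith K u := by
  refine LipschitzWith.of_dist_le_mul fun k l ↦ ?_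
  wlog hkl : k ≤ l generalizing k l
  · rw [dist_comm (u k), dist_comm k]
    exact this l k (le_of_not_ge hkl)
  calc dist (u k) (u l)
      ≤ ∑ _n ∈ Finset.Ico k l, (K : ℝ) := dist_le_Ico_sum_of_dist_le hkl fun _ _ ↦ hu _
    _ = K * dist k l := by
      rw [Finset.sum_const, Nat.card_Ico, nsmul_eq_mul, Nat.cast_sub hkl, dist_comm, Nat.dist_eq,
        abs_of_nonneg (sub_nonneg.mpr (Nat.cast_le.mpr hkl)), mul_comm]

lemma DCStep_f_of_ne {s : DCState} {x : ℤ} (hx : x ≠ s.p) (op : DCOp) :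
    (DCStep s op).f x = s.f x := by
  cases op <;> simp [DCStep, hx]

lemma abs_DCStep_p_sub_p_le_one (s : DCState) (op : DCOp) : |(DCStep s op).p - s.p| ≤ 1 := by
  cases op <;> simp [DCStep]

lemma DCRun_f_eq_of_forall_p_ne (ops : ℕ → DCOp) {i j : ℕ} (hij : i ≤ j) {x : ℤ}
    (hx : ∀ k ∈ Set.Ico i j, (DCRun ops k).p ≠ x) :
    (DCRun ops j).f x = (DCRun ops i).f x := by
  induction j, hij using Nat.le_induction with
  | base => rfl
  | succ j hij ih =>
    calc (DCRun ops (j + 1)).f x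
        = (DCRun ops j).f x := DCStep_f_of_ne (hx j ⟨hij, j.lt_succ_self⟩).symm _
      _ = (DCRun ops i).f x := ih fun k hk ↦ hx k ⟨hk.1, hk.2.trans j.lt_succ_self⟩

lemma support_DCRun_f_sub_subset (ops : ℕ → DCOp) {i j : ℕ} (hij : i ≤ j) :
    Function.support ((DCRun ops j).f - (DCRun ops i).f) ⊆
      (fun k ↦ (DCRun ops k).p) '' Set.Ico i j := by
  intro x hx
  by_contra! h
  have hne : ∀ k ∈ Set.Ico i j, (DCRun ops k).p ≠ x := fun k hk hkx ↦ h ⟨k, hk, hkx⟩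
  exact hx (sub_eq_zero.mpr (DCRun_f_eq_of_forall_p_ne ops hij hne))

lemma lipschitzWith_DCRun_p (ops : ℕ → DCOp) : LipschitzWith 1 fun k ↦ (DCRun ops k).p := by
  refine lipschitzWith_of_dist_succ_le fun k ↦ ?_
  have hstep : |(DCRun ops (k + 1)).p - (DCRun ops k).p| ≤ 1 :=
    abs_DCStep_p_sub_p_le_one (DCRun ops k) (ops (k + 1))
  rw [dist_comm, Int.dist_eq, NNReal.coe_one]
  exact_mod_cast hstep

lemma abs_DCRun_p_sub_le (ops : ℕ → DCOp) (k l : ℕ) :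
    |(DCRun ops k).p - (DCRun ops l).p| ≤ |(k : ℤ) - l| := by
  have h : dist (DCRun ops k).p (DCRun ops l).p ≤ dist k l := by
    simpa using (lipschitzWith_DCRun_p ops).dist_le_mul k l
  rw [Int.dist_eq, Nat.dist_eq] at h
  exact_mod_cast h

/-- **Lemma 4 (compact support of differences).**
For any `0 ≤ i < j`, any two points `a, b` in the support of `f⁽ʲ⁾ − f⁽ⁱ⁾`
satisfy `|a − b| ≤ j − i`; in particular
`max supp(f⁽ʲ⁾ − f⁽ⁱ⁾) − min supp(f⁽ʲ⁾ − f⁽ⁱ⁾) ≤ j − i`. -/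
theorem DC_compact_support (ops : ℕ → DCOp) (i j : ℕ) (hij : i < j)
    (a b : ℤ)
    (ha : a ∈ Function.support ((DCRun ops j).f - (DCRun ops i).f))
    (hb : b ∈ Function.support ((DCRun ops j).f - (DCRun ops i).f)) :
    |a - b| ≤ (j : ℤ) - (i : ℤ) := by
  obtain ⟨k, ⟨hik, hkj⟩, rfl⟩ := support_DCRun_f_sub_subset ops hij.le ha
  obtain ⟨l, ⟨hil, hlj⟩, rfl⟩ := support_DCRun_f_sub_subset ops hij.le hb
  calc |(DCRun ops k).p - (DCRun ops l).p|
      ≤ |(k : ℤ) - l| := abs_DCRun_p_sub_le ops k l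
    _ ≤ (j : ℤ) - i := abs_sub_le_iff.mpr (by omega)
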